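/- arXiv:2012.11953 — 2 statements merged into one kernel-verified Lean document; each statement's English description precedes it below -/
import Mathlib

section
/- Let β ∈ (0,1] and let G be a graph on a vertex set V with |V| = n such that every A ⊆ V with |A| < βn satisfies |N_G(A)| ≥ |A|. Suppose the maximum matching size s_1(G) is strictly less than ⌊n/2⌋. Let IP_2 denote the set of unordered pairs {x,y} of distinct vertices for which there exists a maximum matching of G (a matching with s_1(G) edges) leaving both x and y uncovered. Then |IP_2| ≥ (βn)²/2. -/
namespace Paper

/-- The (outer) neighbourhood `N_G(A)` of a vertex set. -/
def nbr {V : Type*} (G : SimpleGraph V) (A : Set V) : Set V :=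
  {v | v ∉ A ∧ ∃ u ∈ A, G.Adj u v}

/-- A finite set of unordered pairs forming a matching (pairwise disjoint non-loops). -/
def IsMatchingFinset {V : Type*} (F : Finset (Sym2 V)) : Prop :=
  (∀ e ∈ F, ¬ e.IsDiag) ∧ ∀ e ∈ F, ∀ f ∈ F, e ≠ f → ∀ v, v ∈ e → v ∉ f

/-- `s_1(G)`: the maximum size of a matching contained in `G`. -/
noncomputable def sOne {V : Type*} (G : SimpleGraph V) : ℕ :=
  sSup {m : ℕ | ∃ F : Finset (Sym2 V), ↑F ⊆ G.edgeSet ∧ IsMatchingFinset F ∧ F.card = m}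

/-- `IP₂(G)`: the unordered pairs of distinct vertices both left uncovered by some
maximum matching of `G`. -/
def IP2 {V : Type*} (G : SimpleGraph V) : Set (Sym2 V) :=
  {e | ¬ e.IsDiag ∧ ∃ F : Finset (Sym2 V),
    ↑F ⊆ G.edgeSet ∧ IsMatchingFinset F ∧ F.card = sOne G ∧
    ∀ v, v ∈ e → ∀ f ∈ F, v ∉ f}

end Paper

open Paper

/-!
Write `D` for the set of vertices of `G` missed by some maximum matching, and suppose a maximum
matching `M` has an edge `vw` with `v, w ∉ D`. If `M` misses `z` and another maximum matching `N`
does not, replacing the `M`-edge at the `N`-partner of `z` by the `N`-edge at `z` brings `M` closer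
to `N`, and it never removes `vw`, since the vertex that becomes uncovered lies in `D`. So for every
`y ∈ D` some maximum matching contains `vw` and misses `y`; then `v` is not adjacent to `y`, for
otherwise replacing `vw` by `vy` would uncover `w`. Therefore `M` matches `N_G(D)` into `D`, which
also contains the vertices missed by `M`.

Apply this to `G - x` with `x ∈ D`: there `D` becomes `A ∪ {x}`, where `A` is the set of vertices
missed together with `x`, and `|N_G(A)| < |A|` because at least two vertices are always missed. By
expansion `|A| ≥ βn`. So in the graph on `V` with edge set `IP₂` the vertices of `D` have degree at
least `βn`, and the neighbours of `x` alone account for a degree sum of at least `(βn)²`.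
-/

namespace Paper

open Finset

section Counting

lemma sq_div_two_le_card_edgeFinset {V K : Type*} [Fintype V] [Field K] [LinearOrder K]
    [IsStrictOrderedRing K] (H : SimpleGraph V) [DecidableRel H.Adj] {d : K} (hd : 0 ≤ d) {x : V}
    (hx : d ≤ H.degree x) (hnbr : ∀ y ∈ H.neighborFinset x, d ≤ H.degree y) :
    d ^ 2 / 2 ≤ #H.edgeFinset := by
  have handshake : ∑ v, (H.degree v : K) = 2 * #H.edgeFinset :=
    mod_cast H.sum_degrees_eq_twice_card_edges
  have degree_sum : d ^ 2 ≤ ∑ v, (H.degree v : K) :=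
    calc d ^ 2 = d * d := sq d
      _ ≤ #(H.neighborFinset x) * d := by
        rw [H.card_neighborFinset_eq_degree]
        gcongr
      _ = ∑ _y ∈ H.neighborFinset x, d := by rw [sum_const, nsmul_eq_mul]
      _ ≤ ∑ y ∈ H.neighborFinset x, (H.degree y : K) := sum_le_sum hnbr
      _ ≤ ∑ v, (H.degree v : K) :=
        sum_le_univ_sum_of_nonneg fun _ ↦ Nat.cast_nonneg _
  linarith

end Counting

variable {V : Type*} {G : SimpleGraph V} {F M N : Finset (Sym2 V)} {e f : Sym2 V} {a b c v x : V}

section Matching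

/-- The set of vertices left uncovered by a set `F` of edges. -/
def uncovered (F : Finset (Sym2 V)) : Set V :=
  {v | ∀ f ∈ F, v ∉ f}

lemma notMem_uncovered_iff : v ∉ uncovered F ↔ ∃ w, s(v, w) ∈ F := by
  constructor
  · intro hv
    obtain ⟨f, hf, w, rfl⟩ : ∃ f ∈ F, v ∈ f := by simpa [uncovered] using hv
    exact ⟨w, hf⟩
  · rintro ⟨w, hw⟩ hv
    exact hv _ hw (Sym2.mem_mk_left v w)

lemma mem_uncovered_insert [DecidableEq V] :
    v ∈ uncovered (insert e F) ↔ v ∉ e ∧ v ∈ uncovered F :=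
  forall_mem_insert ..

lemma IsMatchingFinset.eq_of_mem (hF : IsMatchingFinset F) (he : e ∈ F) (hf : f ∈ F)
    (hve : v ∈ e) (hvf : v ∈ f) : e = f :=
  not_imp_comm.1 (fun hne ↦ hF.2 e he f hf hne v hve) (not_not_intro hvf)

lemma IsMatchingFinset.mono (hN : IsMatchingFinset N) (hMN : M ⊆ N) : IsMatchingFinset M :=
  ⟨fun e he ↦ hN.1 e (hMN he), fun e he f hf ↦ hN.2 e (hMN he) f (hMN hf)⟩

protected lemma IsMatchingFinset.insert [DecidableEq V] (hF : IsMatchingFinset F) (he : ¬ e.IsDiag)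
    (hunc : ∀ v ∈ e, v ∈ uncovered F) : IsMatchingFinset (insert e F) := by
  refine ⟨forall_mem_insert .. |>.2 ⟨he, hF.1⟩, fun f hf g hg hfg v hvf hvg ↦ ?_⟩
  rcases mem_insert.1 hf with rfl | hfF <;> rcases mem_insert.1 hg with rfl | hgF
  · exact hfg rfl
  · exact hunc v hvf g hgF hvg
  · exact hunc v hvg f hfF hvf
  · exact hfg (hF.eq_of_mem hfF hgF hvf hvg)

lemma IsMatchingFinset.mem_uncovered_erase [DecidableEq V] (hF : IsMatchingFinset F)
    (he : e ∈ F) : v ∈ uncovered (F.erase e) ↔ v ∈ e ∨ v ∈ uncovered F := by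
  constructor
  · intro hv
    refine or_iff_not_imp_left.2 fun hve f hf hvf ↦ hv f (mem_erase.2 ⟨?_, hf⟩) hvf
    rintro rfl
    exact hve hvf
  · rintro (hve | hv) f hf hvf
    · exact ne_of_mem_erase hf (hF.eq_of_mem (mem_of_mem_erase hf) he hvf hve)
    · exact hv f (mem_of_mem_erase hf) hvf

lemma IsMatchingFinset.ncard_uncovered_add [Finite V] (hF : IsMatchingFinset F) :
    (uncovered F).ncard + 2 * #F = Nat.card V := by
  classical
  have covered_eq : (uncovered F)ᶜ = F.biUnion Sym2.toFinset := by
    ext v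
    simp [uncovered]
  have disjoint_edges : (F : Set (Sym2 V)).PairwiseDisjoint Sym2.toFinset :=
    fun e he f hf hef ↦ disjoint_left.2 fun v hve hvf ↦
      hef (hF.eq_of_mem he hf (Sym2.mem_toFinset.1 hve) (Sym2.mem_toFinset.1 hvf))
  have card_covered : #(F.biUnion Sym2.toFinset) = 2 * #F := by
    rw [card_biUnion disjoint_edges,
      sum_const_nat fun e he ↦ Sym2.card_toFinset_of_not_isDiag e (hF.1 e he), mul_comm]
  rw [← Set.ncard_add_ncard_compl (uncovered F), covered_eq, Set.ncard_coe_finset, card_covered]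

end Matching

section MaxMatching

/-- `F` is a maximum matching of `G`: a matching contained in `G` with `s₁(G)` edges. -/
structure IsMaxMatching (G : SimpleGraph V) (F : Finset (Sym2 V)) : Prop where
  subset_edgeSet : ↑F ⊆ G.edgeSet
  isMatching : IsMatchingFinset F
  card_eq : #F = sOne G

lemma bddAbove_card_matching [Finite V] (G : SimpleGraph V) :
    BddAbove {m : ℕ | ∃ F : Finset (Sym2 V), ↑F ⊆ G.edgeSet ∧ IsMatchingFinset F ∧ #F = m} := by
  cases nonempty_fintype V
  classical
  refine ⟨Fintype.card (Sym2 V), ?_⟩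
  rintro m ⟨F, -, -, rfl⟩
  exact card_le_univ F

lemma exists_isMaxMatching [Finite V] (G : SimpleGraph V) : ∃ F, IsMaxMatching G F := by
  have card_empty_mem : 0 ∈ {m : ℕ | ∃ F : Finset (Sym2 V),
      ↑F ⊆ G.edgeSet ∧ IsMatchingFinset F ∧ #F = m} :=
    ⟨∅, by simp, by simp [IsMatchingFinset], card_empty⟩
  obtain ⟨F, hFG, hF, hcard⟩ := Nat.sSup_mem ⟨0, card_empty_mem⟩ (bddAbove_card_matching G)
  exact ⟨F, hFG, hF, hcard⟩

lemma IsMatchingFinset.card_le_sOne [Finite V] (hF : IsMatchingFinset F)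
    (hFG : ↑F ⊆ G.edgeSet) : #F ≤ sOne G :=
  le_csSup (bddAbove_card_matching G) ⟨F, hFG, hF, rfl⟩

lemma IsMaxMatching.not_adj_of_mem_uncovered [Finite V] (hM : IsMaxMatching G M)
    (ha : a ∈ uncovered M) (hb : b ∈ uncovered M) : ¬ G.Adj a b := by
  classical
  intro hab
  have augmented : IsMatchingFinset (insert s(a, b) M) :=
    hM.isMatching.insert (Sym2.mk_isDiag_iff.not.2 hab.ne) (Sym2.ball.2 ⟨ha, hb⟩)
  have card_le : #(insert s(a, b) M) ≤ sOne G := augmented.card_le_sOne <| by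
    rw [coe_insert]
    exact Set.insert_subset hab hM.subset_edgeSet
  rw [card_insert_of_notMem fun h ↦ ha _ h (Sym2.mem_mk_left a b), hM.card_eq] at card_le
  exact Nat.not_succ_le_self _ card_le

lemma IsMaxMatching.rotate [DecidableEq V] (hM : IsMaxMatching G M) (hab : s(a, b) ∈ M)
    (hbc : G.Adj b c) (hc : c ∈ uncovered M) :
    IsMaxMatching G (insert s(b, c) (M.erase s(a, b))) := by
  have hb_erase : b ∈ uncovered (M.erase s(a, b)) :=
    (hM.isMatching.mem_uncovered_erase hab).2 (.inl (Sym2.mem_mk_right a b))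
  have hc_erase : c ∈ uncovered (M.erase s(a, b)) :=
    (hM.isMatching.mem_uncovered_erase hab).2 (.inr hc)
  refine ⟨?_, ?_, ?_⟩
  · rw [coe_insert]
    exact Set.insert_subset hbc
      (.trans (coe_subset.2 (erase_subset _ _)) hM.subset_edgeSet)
  · exact (hM.isMatching.mono (erase_subset _ _)).insert (Sym2.mk_isDiag_iff.not.2 hbc.ne)
      (Sym2.ball.2 ⟨hb_erase, hc_erase⟩)
  · rw [card_insert_of_notMem fun h ↦ hb_erase _ h (Sym2.mem_mk_left b c),
      card_erase_add_one hab, hM.card_eq]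

end MaxMatching

section Inessential

/-- The inessential vertices of `G`: those left uncovered by some maximum matching. This is the set
`D(G)` of the Gallai–Edmonds decomposition. -/
def inessential (G : SimpleGraph V) : Set V :=
  {v | ∃ F, IsMaxMatching G F ∧ v ∈ uncovered F}

lemma IsMaxMatching.uncovered_subset_inessential (hM : IsMaxMatching G M) :
    uncovered M ⊆ inessential G :=
  fun _ hv ↦ ⟨M, hM, hv⟩

lemma IsMaxMatching.mem_inessential_of_adj (hM : IsMaxMatching G M) (hab : s(a, b) ∈ M)
    (hbc : G.Adj b c) (hc : c ∈ uncovered M) : a ∈ inessential G := by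
  classical
  refine (hM.rotate hab hbc hc).uncovered_subset_inessential
    (mem_uncovered_insert.2 ⟨?_, (hM.isMatching.mem_uncovered_erase hab).2 (.inl ?_)⟩)
  · have hab_ne : a ≠ b := (hM.subset_edgeSet hab : G.Adj a b).ne
    have hac_ne : a ≠ c := by
      rintro rfl
      exact hc _ hab (Sym2.mem_mk_left a b)
    simp [hab_ne, hac_ne]
  · exact Sym2.mem_mk_left a b

lemma IsMaxMatching.exists_card_inter_lt [Finite V] [DecidableEq V] (hM : IsMaxMatching G M)
    (hN : IsMaxMatching G N) (heM : e ∈ M) (he : ∀ v ∈ e, v ∉ inessential G)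
    (hcM : c ∈ uncovered M) (hcN : c ∉ uncovered N) :
    ∃ L, IsMaxMatching G L ∧ e ∈ L ∧ #(M ∩ N) < #(L ∩ N) := by
  obtain ⟨b, hcb⟩ := notMem_uncovered_iff.1 hcN
  have hbc : G.Adj b c := (hN.subset_edgeSet hcb : G.Adj c b).symm
  obtain ⟨a, hba⟩ := notMem_uncovered_iff.1 fun hb ↦ hM.not_adj_of_mem_uncovered hb hcM hbc
  rw [Sym2.eq_swap] at hcb hba
  have he_ne : e ≠ s(a, b) := by
    rintro rfl
    exact he a (Sym2.mem_mk_left a b) (hM.mem_inessential_of_adj hba hbc hcM)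
  have hbc_notMem : s(b, c) ∉ M := fun h ↦ hcM _ h (Sym2.mem_mk_right b c)
  have hab_notMem : s(a, b) ∉ N := by
    intro h
    rw [hN.isMatching.eq_of_mem h hcb (Sym2.mem_mk_right a b) (Sym2.mem_mk_left b c)] at hba
    exact hbc_notMem hba
  refine ⟨_, hM.rotate hba hbc hcM, mem_insert_of_mem (mem_erase.2 ⟨he_ne, heM⟩), ?_⟩
  rw [insert_inter_of_mem hcb, erase_inter, erase_eq_of_notMem fun h ↦
    hab_notMem (mem_of_mem_inter_right h), card_insert_of_notMem fun h ↦
    hbc_notMem (mem_of_mem_inter_left h)]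
  exact Nat.lt_succ_self _

lemma IsMaxMatching.exists_mem_uncovered_eq [Finite V] (hM : IsMaxMatching G M)
    (hN : IsMaxMatching G N) (heM : e ∈ M) (he : ∀ v ∈ e, v ∉ inessential G) :
    ∃ L, IsMaxMatching G L ∧ e ∈ L ∧ uncovered L = uncovered N := by
  classical
  obtain ⟨L, ⟨hL, heL⟩, hmax⟩ := Set.exists_max_image {L | IsMaxMatching G L ∧ e ∈ L}
    (fun L ↦ #(L ∩ N)) (Set.toFinite _) ⟨M, hM, heM⟩
  have uncovered_subset : uncovered L ⊆ uncovered N := by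
    intro c hcL
    by_contra hcN
    obtain ⟨L', hL', heL', hlt⟩ := hL.exists_card_inter_lt hN heL he hcL hcN
    exact hlt.not_ge (hmax L' ⟨hL', heL'⟩)
  refine ⟨L, hL, heL, Set.eq_of_subset_of_ncard_le uncovered_subset ?_⟩
  have hcardL := hL.isMatching.ncard_uncovered_add
  have hcardN := hN.isMatching.ncard_uncovered_add
  rw [hL.card_eq] at hcardL
  rw [hN.card_eq] at hcardN
  lia

lemma IsMaxMatching.exists_mem_inessential_mk_mem [Finite V] (hM : IsMaxMatching G M)
    (hv : v ∈ nbr G (inessential G)) : ∃ w ∈ inessential G, s(v, w) ∈ M := by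
  obtain ⟨hvD, y, ⟨N, hN, hyN⟩, hyv⟩ := hv
  obtain ⟨w, hvw⟩ := notMem_uncovered_iff.1 fun h ↦ hvD (hM.uncovered_subset_inessential h)
  refine ⟨w, ?_, hvw⟩
  by_contra hwD
  obtain ⟨L, hL, hvwL, hLN⟩ := hM.exists_mem_uncovered_eq hN hvw (Sym2.ball.2 ⟨hvD, hwD⟩)
  rw [Sym2.eq_swap] at hvwL
  exact hwD (hL.mem_inessential_of_adj hvwL hyv.symm (hLN ▸ hyN))

theorem ncard_nbr_inessential_add_card_le [Finite V] (G : SimpleGraph V) :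
    (nbr G (inessential G)).ncard + Nat.card V ≤ (inessential G).ncard + 2 * sOne G := by
  obtain ⟨M, hM⟩ := exists_isMaxMatching G
  choose! partner partner_mem mk_partner_mem using
    fun v (hv : v ∈ nbr G (inessential G)) ↦ hM.exists_mem_inessential_mk_mem hv
  have ncard_nbr_le : (nbr G (inessential G)).ncard ≤ (inessential G \ uncovered M).ncard := by
    refine Set.ncard_le_ncard_of_injOn partner (fun v hv ↦ ⟨partner_mem v hv, fun h ↦
      h _ (mk_partner_mem v hv) (Sym2.mem_mk_right v _)⟩) fun v hv w hw hvw ↦ ?_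
    have hw_mem := mk_partner_mem w hw
    rw [← hvw] at hw_mem
    exact Sym2.congr_left.1 (hM.isMatching.eq_of_mem (mk_partner_mem v hv) hw_mem
      (Sym2.mem_mk_right v _) (Sym2.mem_mk_right w _))
  have ncard_uncovered := hM.isMatching.ncard_uncovered_add
  have ncard_sdiff := Set.ncard_sdiff_add_ncard_of_subset hM.uncovered_subset_inessential
  rw [hM.card_eq] at ncard_uncovered
  lia

end Inessential

section DeleteVertex

lemma subset_edgeSet_deleteIncidenceSet_iff :
    ↑F ⊆ (G.deleteIncidenceSet x).edgeSet ↔ ↑F ⊆ G.edgeSet ∧ x ∈ uncovered F := by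
  rw [SimpleGraph.edgeSet_deleteIncidenceSet]
  refine ⟨fun h ↦ ⟨fun e he ↦ (h he).1, fun e he hxe ↦ (h he).2 ⟨(h he).1, hxe⟩⟩, ?_⟩
  exact fun ⟨hFG, hx⟩ e he ↦ ⟨hFG he, fun hxe ↦ hx e he hxe.2⟩

lemma sOne_deleteIncidenceSet [Finite V] (hx : x ∈ inessential G) :
    sOne (G.deleteIncidenceSet x) = sOne G := by
  obtain ⟨M, hM, hxM⟩ := hx
  obtain ⟨N, hN⟩ := exists_isMaxMatching (G.deleteIncidenceSet x)
  apply le_antisymm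
  · rw [← hN.card_eq]
    exact hN.isMatching.card_le_sOne (subset_edgeSet_deleteIncidenceSet_iff.1 hN.subset_edgeSet).1
  · rw [← hM.card_eq]
    exact hM.isMatching.card_le_sOne
      (subset_edgeSet_deleteIncidenceSet_iff.2 ⟨hM.subset_edgeSet, hxM⟩)

lemma isMaxMatching_deleteIncidenceSet_iff [Finite V] (hx : x ∈ inessential G) :
    IsMaxMatching (G.deleteIncidenceSet x) F ↔ IsMaxMatching G F ∧ x ∈ uncovered F := by
  constructor
  · rintro ⟨hFG, hF, hcard⟩
    rw [subset_edgeSet_deleteIncidenceSet_iff] at hFG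
    exact ⟨⟨hFG.1, hF, hcard.trans (sOne_deleteIncidenceSet hx)⟩, hFG.2⟩
  · rintro ⟨⟨hFG, hF, hcard⟩, hxF⟩
    exact ⟨subset_edgeSet_deleteIncidenceSet_iff.2 ⟨hFG, hxF⟩, hF,
      hcard.trans (sOne_deleteIncidenceSet hx).symm⟩

end DeleteVertex

section UncoveredPairs

/-- The graph on the vertices of `G` whose edge set is `IP₂(G)`. -/
def uncoveredPairGraph (G : SimpleGraph V) : SimpleGraph V :=
  SimpleGraph.fromEdgeSet (IP2 G)

lemma edgeSet_uncoveredPairGraph (G : SimpleGraph V) : (uncoveredPairGraph G).edgeSet = IP2 G := by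
  rw [uncoveredPairGraph, SimpleGraph.edgeSet_fromEdgeSet, sdiff_eq_left, Set.disjoint_left]
  exact fun e he ↦ he.1

lemma uncoveredPairGraph_adj {y : V} : (uncoveredPairGraph G).Adj x y ↔
    x ≠ y ∧ ∃ F, IsMaxMatching G F ∧ x ∈ uncovered F ∧ y ∈ uncovered F := by
  rw [← SimpleGraph.mem_edgeSet, edgeSet_uncoveredPairGraph]
  refine and_congr Sym2.mk_isDiag_iff.not (exists_congr fun F ↦ ?_)
  constructor
  · rintro ⟨hFG, hF, hcard, hunc⟩
    exact ⟨⟨hFG, hF, hcard⟩, Sym2.ball.1 hunc⟩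
  · rintro ⟨⟨hFG, hF, hcard⟩, hunc⟩
    exact ⟨hFG, hF, hcard, Sym2.ball.2 hunc⟩

lemma inessential_deleteIncidenceSet [Finite V] (hx : x ∈ inessential G) :
    inessential (G.deleteIncidenceSet x) = insert x ((uncoveredPairGraph G).neighborSet x) := by
  ext y
  simp only [inessential, isMaxMatching_deleteIncidenceSet_iff hx, Set.mem_ofPred_eq,
    Set.mem_insert_iff, SimpleGraph.mem_neighborSet, uncoveredPairGraph_adj, and_assoc]
  constructor
  · exact fun hy ↦ or_iff_not_imp_left.2 fun hyx ↦ ⟨Ne.symm hyx, hy⟩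
  · rintro (rfl | ⟨-, hy⟩)
    · obtain ⟨F, hF, hyF⟩ := hx
      exact ⟨F, hF, hyF, hyF⟩
    · exact hy

lemma nbr_neighborSet_uncoveredPairGraph_subset [Finite V] (hx : x ∈ inessential G) :
    nbr G ((uncoveredPairGraph G).neighborSet x) ⊆
      nbr (G.deleteIncidenceSet x) (inessential (G.deleteIncidenceSet x)) := by
  rintro v ⟨hv, y, hxy, hyv⟩
  obtain ⟨hxy_ne, F, hF, hxF, hyF⟩ := uncoveredPairGraph_adj.1 hxy
  have hvx_ne : v ≠ x := by
    rintro rfl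
    exact hF.not_adj_of_mem_uncovered hyF hxF hyv
  rw [inessential_deleteIncidenceSet hx]
  exact ⟨by simp [hvx_ne, hv], y, Set.mem_insert_of_mem x hxy,
    SimpleGraph.deleteIncidenceSet_adj.2 ⟨hyv, hxy_ne.symm, hvx_ne⟩⟩

theorem ncard_nbr_neighborSet_uncoveredPairGraph_add_card_le [Finite V] (hx : x ∈ inessential G) :
    (nbr G ((uncoveredPairGraph G).neighborSet x)).ncard + Nat.card V ≤
      ((uncoveredPairGraph G).neighborSet x).ncard + 1 + 2 * sOne G :=
  calc
    _ ≤ (nbr (G.deleteIncidenceSet x) (inessential (G.deleteIncidenceSet x))).ncard +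
        Nat.card V := by
      gcongr
      · exact Set.toFinite _
      · exact nbr_neighborSet_uncoveredPairGraph_subset hx
    _ ≤ (inessential (G.deleteIncidenceSet x)).ncard + 2 * sOne (G.deleteIncidenceSet x) :=
      ncard_nbr_inessential_add_card_le _
    _ = _ := by
      rw [inessential_deleteIncidenceSet hx, sOne_deleteIncidenceSet hx,
        Set.ncard_insert_of_notMem (uncoveredPairGraph G).notMem_neighborSet_self]

end UncoveredPairs

end Paper

/-- **Lemma 18 (many uncovered pairs).**  If `G` is an expander (`|N_G(A)| ≥ |A|` for all
`|A| < βn`) whose maximum matching is not near-perfect (`s_1(G) < ⌊n/2⌋`), then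
`|IP₂| ≥ (βn)²/2`. -/
theorem lemma_IP2 (V : Type*) [Fintype V] (G : SimpleGraph V) (β : ℝ)
    (hβ : 0 < β) (hβ1 : β ≤ 1)
    (hexp : ∀ A : Set V, (A.ncard : ℝ) < β * Fintype.card V →
      A.ncard ≤ (nbr G A).ncard)
    (hs : sOne G < Fintype.card V / 2) :
    (β * Fintype.card V) ^ 2 / 2 ≤ ((IP2 G).ncard : ℝ) := by
  classical
  have le_degree : ∀ x ∈ inessential G,
      β * Fintype.card V ≤ (uncoveredPairGraph G).degree x := by
    intro x hx
    have nbr_bound := ncard_nbr_neighborSet_uncoveredPairGraph_add_card_le hx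
    rw [Nat.card_eq_fintype_card] at nbr_bound
    rw [← SimpleGraph.card_neighborFinset_eq_degree, SimpleGraph.neighborFinset,
      ← Set.ncard_eq_toFinset_card']
    by_contra! hlt
    have expansion := hexp _ hlt
    lia
  obtain ⟨M, hM⟩ := exists_isMaxMatching G
  obtain ⟨x, hxM⟩ : (uncovered M).Nonempty := by
    have ncard_uncovered := hM.isMatching.ncard_uncovered_add
    rw [hM.card_eq, Nat.card_eq_fintype_card] at ncard_uncovered
    exact Set.nonempty_of_ncard_ne_zero (by lia)
  rw [← edgeSet_uncoveredPairGraph, ← SimpleGraph.coe_edgeFinset, Set.ncard_coe_finset]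
  refine sq_div_two_le_card_edgeFinset _ (by positivity) (le_degree x ⟨M, hM, hxM⟩) fun y hy ↦ ?_
  rw [SimpleGraph.mem_neighborFinset, uncoveredPairGraph_adj] at hy
  obtain ⟨-, F, hF, -, hyF⟩ := hy
  exact le_degree y ⟨F, hF, hyF⟩
end

section
/- Let X be a finite set, p : X → [0,1], and let 𝒢 = (X, ℰ) be a graph on X. Let Δ = max_{x∈X} Σ_{y ∈ N_𝒢(x)} p(y) and p(X) = Σ_{x∈X} p(x), and let X_p ⊆ X be the random subset obtained by including each x ∈ X independently with probability p(x). Let r ≥ 1 be an integer and let 𝒯 be a set of paths on r vertices in 𝒢 (for r = 1, single vertices), where for a path T we write p[T] = ∏_{x ∈ T} p(x) and p[𝒯] = Σ_{T∈𝒯} p[T]. If p[𝒯] ≥ 6·(3Δ)^{r−2}·p(X), then the probability that no T ∈ 𝒯 has all its vertices in X_p is at most exp(−p[𝒯]/((3Δ)^{r−1}·r^r)). -/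
open MeasureTheory Filter
open scoped ENNReal

namespace Paper

/-- The uniform distribution on `(0,1]`. -/
noncomputable def uniformLabel : Measure ℝ := volume.restrict (Set.Ioc (0 : ℝ) 1)

/-- I.i.d. uniform labels on a finite set; thresholding the label of `x` at `p x`
realises the product-Bernoulli random subset `X_p`. -/
noncomputable def bernoulliFamily (X : Type*) [Fintype X] : Measure (X → ℝ) :=
  Measure.pi fun _ => uniformLabel

/-- `Δ`: the maximum over `x` of the total weight `p(N_𝒢(x))` of the neighbourhood. -/
noncomputable def maxNbrWeight {X : Type*} [Fintype X] (𝒢 : SimpleGraph X)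
    (p : X → ℝ) : ℝ :=
  sSup {s : ℝ | ∃ x, s = ∑ᶠ y ∈ 𝒢.neighborSet x, p y}

/-- `p[𝒯] = Σ_{T∈𝒯} ∏_{x∈T} p(x)` for a family of paths (given as lists). -/
noncomputable def pathWeight {X : Type*} (p : X → ℝ) (𝒯 : Set (List X)) : ℝ :=
  ∑ᶠ T ∈ 𝒯, (T.map p).prod

end Paper

open Paper

/-! Write `N` for the number of paths of `𝒯` contained in `X_p`, and `μ = p[𝒯]` for its mean.
Since `ℙ(N = 0) ≤ 𝔼 (1 - θ) ^ N` for `0 ≤ θ ≤ 1`, it suffices to prove Janson's inequality in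
the form `𝔼 (1 - θ) ^ N ≤ exp (-θ μ + θ² Δ̄ / 2)`, where `Δ̄` is the sum of `ℙ(T ∪ S ⊆ X_p)`
over ordered pairs of distinct intersecting paths. Correlation inequalities are replaced by the
identity `𝔼 (𝟙[B ⊆ X_p] f(X_p)) = (∏_{x ∈ B} p x) · 𝔼 f(X_p ∪ B)`: it yields independence when
`f` ignores `B` and a negative correlation bound when `f` is antitone. Members of the family are
added one at a time; those disjoint from the new one are independent of it, and the others are
removed by Bernoulli's inequality.

To bound `Δ̄`, condition on `T ⊆ X_p`, which replaces `p` by `1` on `T` and raises the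
neighbourhood weights to at most `K = Δ + r`. A path `S` meeting `T` passes through one of the
`r` vertices of `T`, at one of `r` positions, and its other `r - 1` vertices contribute at most
`K ^ (r - 1)`; hence `Δ̄ ≤ μ D` with `D = r² K ^ (r - 1)`, and `θ = 1 / D` gives
`exp (-μ / (2 D))`. For `r ≥ 2`, comparing the hypothesis with the trivial bound
`μ ≤ p(X) Δ ^ (r - 1)` forces `Δ ≥ 6 · 3 ^ (r - 2) ≥ 2 r`, so that `K ≤ 3 Δ / 2` and
`2 D ≤ (3 Δ) ^ (r - 1) r ^ r`. Distinct paths on one vertex are disjoint, so for `r = 1`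
one takes `θ = 1`.
-/

namespace Paper

section BernoulliExpectation

variable {X : Type*} [Fintype X] [DecidableEq X] {p : X → ℝ}

/-- The probability that the random subset `X_p` equals `A`. -/
noncomputable def bernoulliWeight (p : X → ℝ) (A : Finset X) : ℝ :=
  ∏ x, if x ∈ A then p x else 1 - p x

/-- The expectation `𝔼 f(X_p)`, written as a finite sum over the possible values of `X_p`. -/
noncomputable def bernoulliExp (p : X → ℝ) (f : Finset X → ℝ) : ℝ :=
  ∑ A, bernoulliWeight p A * f A

lemma bernoulliWeight_nonneg (hp : ∀ x, p x ∈ Set.Icc 0 1) (A : Finset X) :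
    0 ≤ bernoulliWeight p A :=
  Finset.prod_nonneg fun x _ => by
    split_ifs
    exacts [(hp x).1, sub_nonneg.2 (hp x).2]

lemma sum_bernoulliWeight (p : X → ℝ) : ∑ A, bernoulliWeight p A = 1 := by
  have h := Finset.prod_add p (1 - p) Finset.univ
  simp only [Pi.sub_apply, Pi.one_apply, add_sub_cancel, Finset.prod_const_one,
    Finset.powerset_univ] at h
  rw [h]
  refine Finset.sum_congr rfl fun A _ => ?_
  simp [bernoulliWeight, Finset.prod_ite, Finset.filter_not]

lemma bernoulliExp_one (p : X → ℝ) : bernoulliExp p (fun _ => 1) = 1 := by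
  simp [bernoulliExp, sum_bernoulliWeight]

lemma bernoulliExp_mono (hp : ∀ x, p x ∈ Set.Icc 0 1) {f g : Finset X → ℝ} (h : f ≤ g) :
    bernoulliExp p f ≤ bernoulliExp p g :=
  Finset.sum_le_sum fun A _ => mul_le_mul_of_nonneg_left (h A) (bernoulliWeight_nonneg hp A)

lemma bernoulliExp_nonneg (hp : ∀ x, p x ∈ Set.Icc 0 1) {f : Finset X → ℝ} (h : 0 ≤ f) :
    0 ≤ bernoulliExp p f :=
  Finset.sum_nonneg fun A _ => mul_nonneg (bernoulliWeight_nonneg hp A) (h A)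

lemma bernoulliExp_sub_const_mul (p : X → ℝ) (c : ℝ) (f g : Finset X → ℝ) :
    bernoulliExp p (fun A => f A - c * g A) = bernoulliExp p f - c * bernoulliExp p g := by
  simp [bernoulliExp, mul_sub, Finset.sum_sub_distrib, Finset.mul_sum, mul_left_comm]

lemma bernoulliExp_sum {ι : Type*} (p : X → ℝ) (s : Finset ι) (f : ι → Finset X → ℝ) :
    bernoulliExp p (fun A => ∑ i ∈ s, f i A) = ∑ i ∈ s, bernoulliExp p (f i) := by
  simp only [bernoulliExp, Finset.mul_sum]
  exact Finset.sum_comm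

lemma sum_eq_sum_powerset_erase_add {M : Type*} [AddCommMonoid M] (x : X) (f : Finset X → M) :
    ∑ A, f A = ∑ A ∈ (Finset.univ.erase x).powerset, (f A + f (insert x A)) := by
  rw [Finset.sum_add_distrib, ← Finset.sum_powerset_insert (Finset.notMem_erase x _),
    Finset.insert_erase (Finset.mem_univ x), Finset.powerset_univ]

lemma mul_bernoulliWeight_insert_add {x : X} {A : Finset X} (hx : x ∉ A) :
    p x * (bernoulliWeight p A + bernoulliWeight p (insert x A)) =
      bernoulliWeight p (insert x A) := by
  have split_at (B : Finset X) : bernoulliWeight p B =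
      (if x ∈ B then p x else 1 - p x) *
        ∏ y ∈ Finset.univ.erase x, if y ∈ B then p y else 1 - p y :=
    (Finset.mul_prod_erase Finset.univ _ (Finset.mem_univ x)).symm
  have others : ∏ y ∈ Finset.univ.erase x, (if y ∈ insert x A then p y else 1 - p y) =
      ∏ y ∈ Finset.univ.erase x, (if y ∈ A then p y else 1 - p y) :=
    Finset.prod_congr rfl fun y hy => by simp [Finset.ne_of_mem_erase hy]
  rw [split_at A, split_at (insert x A), others, if_neg hx, if_pos (Finset.mem_insert_self x A)]
  ring

lemma bernoulliExp_ite_mem (p : X → ℝ) (x : X) (f : Finset X → ℝ) :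
    bernoulliExp p (fun A => if x ∈ A then f A else 0) =
      p x * bernoulliExp p (fun A => f (insert x A)) := by
  simp only [bernoulliExp, sum_eq_sum_powerset_erase_add x, Finset.mul_sum]
  refine Finset.sum_congr rfl fun A hA => ?_
  have hx : x ∉ A := fun h => Finset.notMem_erase x _ (Finset.mem_powerset.1 hA h)
  rw [if_neg hx, if_pos (Finset.mem_insert_self x A), Finset.insert_idem]
  linear_combination -f (insert x A) * mul_bernoulliWeight_insert_add (p := p) hx

lemma bernoulliExp_ite_subset (p : X → ℝ) (B : Finset X) (f : Finset X → ℝ) :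
    bernoulliExp p (fun A => if B ⊆ A then f A else 0) =
      (∏ x ∈ B, p x) * bernoulliExp p (fun A => f (A ∪ B)) := by
  induction B using Finset.induction_on generalizing f with
  | empty => simp
  | insert x B hx ih =>
    simp only [Finset.insert_subset_iff, ite_and, bernoulliExp_ite_mem,
      Finset.subset_insert_iff_of_notMem hx, ih, Finset.prod_insert hx, mul_assoc,
      Finset.union_insert]

lemma bernoulliExp_ite_subset_le (hp : ∀ x, p x ∈ Set.Icc 0 1) (B : Finset X)
    {f : Finset X → ℝ} (hf : Antitone f) :
    bernoulliExp p (fun A => if B ⊆ A then f A else 0) ≤ (∏ x ∈ B, p x) * bernoulliExp p f := by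
  rw [bernoulliExp_ite_subset]
  exact mul_le_mul_of_nonneg_left
    (bernoulliExp_mono hp fun A => hf Finset.subset_union_left)
    (Finset.prod_nonneg fun x _ => (hp x).1)

end BernoulliExpectation

section Janson

variable {X ι : Type*} {p : X → ℝ} {B : ι → Finset X} {s : Finset ι} {θ : ℝ}

/-- The expected number `p[B]` of members of `(B i)_{i ∈ s}` contained in `X_p`. -/
def familyWeight (p : X → ℝ) (B : ι → Finset X) (s : Finset ι) : ℝ :=
  ∑ i ∈ s, ∏ x ∈ B i, p x

lemma familyWeight_nonneg (hp : ∀ x, 0 ≤ p x) (B : ι → Finset X) (s : Finset ι) :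
    0 ≤ familyWeight p B s :=
  Finset.sum_nonneg fun _ _ => Finset.prod_nonneg fun x _ => hp x

variable [DecidableEq X]

/-- The number of members of the indexed family `(B i)_{i ∈ s}` contained in `A`. -/
def containedCount (B : ι → Finset X) (s : Finset ι) (A : Finset X) : ℕ :=
  (s.filter fun i => B i ⊆ A).card

lemma containedCount_mono (B : ι → Finset X) (s : Finset ι) : Monotone (containedCount B s) :=
  fun _ _ hAC => Finset.card_le_card <|
    Finset.monotone_filter_right s fun _ _ hi => hi.trans hAC

lemma containedCount_union_of_disjoint {C : Finset X} (h : ∀ i ∈ s, Disjoint (B i) C)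
    (A : Finset X) : containedCount B s (A ∪ C) = containedCount B s A :=
  congrArg Finset.card <| Finset.filter_congr fun i hi =>
    ⟨fun hi' => (h i hi).left_le_of_le_sup_right hi', fun hi' => hi'.trans Finset.subset_union_left⟩

lemma containedCount_insert [DecidableEq ι] {i : ι} (hi : i ∉ s) (A : Finset X) :
    containedCount B (insert i s) A = containedCount B s A + if B i ⊆ A then 1 else 0 := by
  unfold containedCount
  rw [Finset.filter_insert]
  split_ifs
  · exact Finset.card_insert_of_notMem fun h => hi (Finset.mem_filter.1 h).1
  · rfl

lemma containedCount_filter_add_filter_not (P : ι → Prop) [DecidablePred P] (A : Finset X) :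
    containedCount B (s.filter P) A + containedCount B (s.filter fun i => ¬ P i) A =
      containedCount B s A := by
  simp only [containedCount, Finset.filter_comm P, Finset.filter_comm fun i => ¬ P i]
  exact Finset.card_filter_add_card_filter_not P

lemma antitone_one_sub_pow_containedCount (hθ : θ ∈ Set.Icc 0 1) (B : ι → Finset X)
    (s : Finset ι) : Antitone fun A => (1 - θ) ^ containedCount B s A :=
  fun _ _ h => pow_le_pow_of_le_one (sub_nonneg.2 hθ.2) (sub_le_self 1 hθ.1)
    (containedCount_mono B s h)

lemma one_sub_mul_sum_le_one_sub_pow_containedCount (hθ : θ ∈ Set.Icc 0 1) (A : Finset X) :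
    1 - θ * ∑ i ∈ s, (if B i ⊆ A then 1 else 0) ≤ (1 - θ) ^ containedCount B s A := by
  calc 1 - θ * ∑ i ∈ s, (if B i ⊆ A then 1 else 0) = 1 + containedCount B s A * -θ := by
        rw [Finset.sum_boole, containedCount]
        ring
    _ ≤ (1 + -θ) ^ containedCount B s A := one_add_mul_le_pow (by linarith [hθ.2]) _
    _ = (1 - θ) ^ containedCount B s A := by rw [← sub_eq_add_neg]

open Classical in
/-- The probability that `X_p` contains both `B i` and `B j`, counted only when `i ≠ j` and the
two sets meet. -/
noncomputable def interaction (p : X → ℝ) (B : ι → Finset X) (i j : ι) : ℝ :=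
  if i ≠ j ∧ ¬ Disjoint (B i) (B j) then ∏ x ∈ B i ∪ B j, p x else 0

/-- The total correlation `Δ̄` of Janson's inequality, over ordered pairs. -/
noncomputable def interactionSum (p : X → ℝ) (B : ι → Finset X) (s : Finset ι) : ℝ :=
  ∑ i ∈ s, ∑ j ∈ s, interaction p B i j

lemma interaction_self (p : X → ℝ) (B : ι → Finset X) (i : ι) : interaction p B i i = 0 := by
  simp [interaction]

open Classical in
lemma interaction_comm (p : X → ℝ) (B : ι → Finset X) (i j : ι) :
    interaction p B i j = interaction p B j i := by
  rw [interaction, interaction, Finset.union_comm]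
  exact if_congr (and_congr ne_comm (not_congr disjoint_comm)) rfl rfl

lemma interactionSum_insert [DecidableEq ι] {i : ι} (hi : i ∉ s) :
    interactionSum p B (insert i s) =
      interactionSum p B s + 2 * ∑ j ∈ s, interaction p B i j := by
  simp only [interactionSum, Finset.sum_insert hi, Finset.sum_add_distrib, interaction_self,
    interaction_comm p B _ i]
  ring

open Classical in
lemma sum_interaction_eq_sum_filter {i : ι} (hi : i ∉ s) :
    ∑ j ∈ s, interaction p B i j =
      ∑ j ∈ s.filter fun j => ¬ Disjoint (B i) (B j), ∏ x ∈ B i ∪ B j, p x := by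
  rw [Finset.sum_filter]
  refine Finset.sum_congr rfl fun j hj => ?_
  simp [interaction, show i ≠ j by rintro rfl; exact hi hj]

variable [Fintype X]

lemma mul_bernoulliExp_le_bernoulliExp_ite_subset (hp : ∀ x, p x ∈ Set.Icc 0 1)
    (hθ : θ ∈ Set.Icc 0 1) {i : ι} (hi : i ∉ s) :
    (∏ x ∈ B i, p x - θ * ∑ j ∈ s, interaction p B i j) *
        bernoulliExp p
          (fun A => (1 - θ) ^ containedCount B (s.filter fun j => Disjoint (B i) (B j)) A) ≤
      bernoulliExp p (fun A => if B i ⊆ A then (1 - θ) ^ containedCount B s A else 0) := by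
  set far := s.filter fun j => Disjoint (B i) (B j)
  set near := s.filter fun j => ¬ Disjoint (B i) (B j)
  set F : Finset X → ℝ := fun A => (1 - θ) ^ containedCount B far A
  have hF : Antitone F := antitone_one_sub_pow_containedCount hθ B far
  have hfar : ∀ j ∈ far, Disjoint (B j) (B i) := fun j hj => (Finset.mem_filter.1 hj).2.symm
  have far_indep : bernoulliExp p (fun A => if B i ⊆ A then F A else 0) =
      (∏ x ∈ B i, p x) * bernoulliExp p F := by
    rw [bernoulliExp_ite_subset]
    simp only [F, containedCount_union_of_disjoint hfar]
  have pointwise (A : Finset X) :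
      (if B i ⊆ A then F A else 0) - θ * ∑ j ∈ near, (if B i ∪ B j ⊆ A then F A else 0) ≤
        if B i ⊆ A then (1 - θ) ^ containedCount B s A else 0 := by
    by_cases hA : B i ⊆ A
    · have hnear := mul_le_mul_of_nonneg_right
        (one_sub_mul_sum_le_one_sub_pow_containedCount (B := B) (s := near) hθ A)
        (pow_nonneg (sub_nonneg.2 hθ.2) (containedCount B far A))
      rw [← pow_add, add_comm, containedCount_filter_add_filter_not] at hnear
      simpa only [hA, Finset.union_subset_iff, true_and, if_true, sub_mul, one_mul, mul_assoc,
        Finset.sum_mul, ite_mul, zero_mul, F] using hnear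
    · simp [hA, Finset.union_subset_iff]
  calc _ = (∏ x ∈ B i, p x) * bernoulliExp p F -
        θ * ∑ j ∈ near, (∏ x ∈ B i ∪ B j, p x) * bernoulliExp p F := by
        rw [sum_interaction_eq_sum_filter hi, sub_mul, mul_assoc, Finset.sum_mul]
    _ ≤ bernoulliExp p (fun A => if B i ⊆ A then F A else 0) -
        θ * ∑ j ∈ near, bernoulliExp p (fun A => if B i ∪ B j ⊆ A then F A else 0) := by
        rw [far_indep]
        gcongr with j
        · exact hθ.1
        · exact bernoulliExp_ite_subset_le hp _ hF
    _ = _ := by rw [← bernoulliExp_sum, ← bernoulliExp_sub_const_mul]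
    _ ≤ _ := bernoulliExp_mono hp pointwise

lemma bernoulliExp_one_sub_pow_insert_le (hp : ∀ x, p x ∈ Set.Icc 0 1)
    (hθ : θ ∈ Set.Icc 0 1) [DecidableEq ι] {i : ι} (hi : i ∉ s) :
    bernoulliExp p (fun A => (1 - θ) ^ containedCount B (insert i s) A) ≤
      Real.exp (-θ * (∏ x ∈ B i, p x - θ * ∑ j ∈ s, interaction p B i j)) *
        bernoulliExp p (fun A => (1 - θ) ^ containedCount B s A) := by
  set W := bernoulliExp p fun A => (1 - θ) ^ containedCount B s A
  set I := bernoulliExp p fun A => if B i ⊆ A then (1 - θ) ^ containedCount B s A else 0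
  set b := ∏ x ∈ B i, p x - θ * ∑ j ∈ s, interaction p B i j
  have term_nonneg (A : Finset X) : 0 ≤ (1 - θ) ^ containedCount B s A :=
    pow_nonneg (sub_nonneg.2 hθ.2) _
  have hW : 0 ≤ W := bernoulliExp_nonneg hp term_nonneg
  have removal : bernoulliExp p (fun A => (1 - θ) ^ containedCount B (insert i s) A) =
      W - θ * I := by
    rw [← bernoulliExp_sub_const_mul]
    congr! 2 with A
    rw [containedCount_insert hi]
    split_ifs <;> ring
  have hbW : b * W ≤ I := by
    rcases le_total 0 b with hb | hb
    · refine le_trans (mul_le_mul_of_nonneg_left (bernoulliExp_mono hp fun A => ?_) hb)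
        (mul_bernoulliExp_le_bernoulliExp_ite_subset hp hθ hi)
      exact pow_le_pow_of_le_one (sub_nonneg.2 hθ.2) (sub_le_self 1 hθ.1)
        (Finset.card_le_card (Finset.filter_subset_filter _ (Finset.filter_subset _ s)))
    · refine (mul_nonpos_of_nonpos_of_nonneg hb hW).trans (bernoulliExp_nonneg hp fun A => ?_)
      split_ifs
      exacts [term_nonneg A, le_rfl]
  calc _ = W - θ * I := removal
    _ ≤ (-θ * b + 1) * W := by linarith [mul_le_mul_of_nonneg_left hbW hθ.1]
    _ ≤ _ := mul_le_mul_of_nonneg_right (Real.add_one_le_exp _) hW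

theorem bernoulliExp_one_sub_pow_containedCount_le_exp (hp : ∀ x, p x ∈ Set.Icc 0 1)
    (hθ : θ ∈ Set.Icc 0 1) (B : ι → Finset X) (s : Finset ι) :
    bernoulliExp p (fun A => (1 - θ) ^ containedCount B s A) ≤
      Real.exp (-θ * familyWeight p B s + θ ^ 2 / 2 * interactionSum p B s) := by
  classical
  induction s using Finset.induction_on with
  | empty => simp [containedCount, bernoulliExp_one, familyWeight, interactionSum]
  | insert i s hi ih =>
    calc _ ≤ Real.exp (-θ * (∏ x ∈ B i, p x - θ * ∑ j ∈ s, interaction p B i j)) *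
          Real.exp (-θ * familyWeight p B s + θ ^ 2 / 2 * interactionSum p B s) :=
          (bernoulliExp_one_sub_pow_insert_le hp hθ hi).trans
            (mul_le_mul_of_nonneg_left ih (Real.exp_pos _).le)
      _ = _ := by
          rw [← Real.exp_add, interactionSum_insert hi, familyWeight, familyWeight,
            Finset.sum_insert hi]
          congr 1
          ring

end Janson

section RandomSubset

variable {X ι : Type*} [Fintype X] {p : X → ℝ}

open Classical in
/-- The random subset `X_p`, as a function of the labels. -/
noncomputable def randomSubset (p : X → ℝ) (ω : X → ℝ) : Finset X :=
  Finset.univ.filter fun x => ω x ≤ p x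

lemma mem_randomSubset {ω : X → ℝ} {x : X} : x ∈ randomSubset p ω ↔ ω x ≤ p x := by
  simp [randomSubset]

instance : IsProbabilityMeasure uniformLabel := ⟨by simp [uniformLabel]⟩

instance : IsProbabilityMeasure (bernoulliFamily X) := by
  unfold bernoulliFamily; infer_instance

lemma uniformLabel_Iic {a : ℝ} (ha : a ∈ Set.Icc 0 1) :
    uniformLabel (Set.Iic a) = ENNReal.ofReal a := by
  rw [uniformLabel, Measure.restrict_apply measurableSet_Iic, Set.inter_comm, Set.Ioc_inter_Iic,
    min_eq_right ha.2, Real.volume_Ioc, sub_zero]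

lemma uniformLabel_Ioi {a : ℝ} (ha : a ∈ Set.Icc 0 1) :
    uniformLabel (Set.Ioi a) = ENNReal.ofReal (1 - a) := by
  rw [uniformLabel, Measure.restrict_apply measurableSet_Ioi, Set.inter_comm, Set.Ioc_inter_Ioi,
    max_eq_right ha.1, Real.volume_Ioc]

variable [DecidableEq X]

lemma randomSubset_preimage_singleton (p : X → ℝ) (A : Finset X) :
    randomSubset p ⁻¹' {A} =
      Set.univ.pi fun x => if x ∈ A then Set.Iic (p x) else Set.Ioi (p x) := by
  ext ω
  simp only [Set.mem_preimage, Set.mem_singleton_iff, Finset.ext_iff, mem_randomSubset,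
    Set.mem_pi, Set.mem_univ, true_implies]
  refine forall_congr' fun x => ?_
  split_ifs with hx <;> simp [hx]

lemma bernoulliFamily_randomSubset_singleton (hp : ∀ x, p x ∈ Set.Icc 0 1) (A : Finset X) :
    bernoulliFamily X (randomSubset p ⁻¹' {A}) = ENNReal.ofReal (bernoulliWeight p A) := by
  rw [randomSubset_preimage_singleton, bernoulliFamily, Measure.pi_pi, bernoulliWeight,
    ENNReal.ofReal_prod_of_nonneg fun x _ => by
      split_ifs
      exacts [(hp x).1, sub_nonneg.2 (hp x).2]]
  refine Finset.prod_congr rfl fun x _ => ?_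
  split_ifs
  exacts [uniformLabel_Iic (hp x), uniformLabel_Ioi (hp x)]

lemma bernoulliFamily_setOf_randomSubset (hp : ∀ x, p x ∈ Set.Icc 0 1) (P : Finset X → Prop)
    [DecidablePred P] :
    bernoulliFamily X {ω | P (randomSubset p ω)} =
      ENNReal.ofReal (bernoulliExp p fun A => if P A then 1 else 0) := by
  have measurable_fiber (A : Finset X) : MeasurableSet (randomSubset p ⁻¹' {A}) := by
    rw [randomSubset_preimage_singleton]
    refine MeasurableSet.univ_pi fun x => ?_
    split_ifs
    exacts [measurableSet_Iic, measurableSet_Ioi]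
  have fibers := sum_measure_preimage_singleton (μ := bernoulliFamily X)
    (Finset.univ.filter P) fun A _ => measurable_fiber A
  have event_eq : {ω | P (randomSubset p ω)} =
      randomSubset p ⁻¹' (Finset.univ.filter P : Finset (Finset X)) := by
    ext ω
    simp
  simp only [event_eq, ← fibers, bernoulliFamily_randomSubset_singleton hp, bernoulliExp, mul_ite,
    mul_one, mul_zero, ← Finset.sum_filter]
  exact (ENNReal.ofReal_sum_of_nonneg fun A _ => bernoulliWeight_nonneg hp A).symm

theorem bernoulliFamily_forall_not_subset_le_exp (hp : ∀ x, p x ∈ Set.Icc 0 1) {θ : ℝ}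
    (hθ : θ ∈ Set.Icc 0 1) (B : ι → Finset X) (s : Finset ι) :
    bernoulliFamily X {ω | ∀ i ∈ s, ¬ B i ⊆ randomSubset p ω} ≤
      ENNReal.ofReal
        (Real.exp (-θ * familyWeight p B s + θ ^ 2 / 2 * interactionSum p B s)) := by
  rw [bernoulliFamily_setOf_randomSubset hp fun A => ∀ i ∈ s, ¬ B i ⊆ A]
  refine ENNReal.ofReal_le_ofReal <| le_trans (bernoulliExp_mono hp fun A => ?_)
    (bernoulliExp_one_sub_pow_containedCount_le_exp hp hθ B s)
  split_ifs with hA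
  · rw [containedCount, Finset.filter_false_of_mem hA, Finset.card_empty, pow_zero]
  · exact pow_nonneg (sub_nonneg.2 hθ.2) _

theorem bernoulliFamily_forall_not_subset_le_exp_neg_div (hp : ∀ x, p x ∈ Set.Icc 0 1)
    (B : ι → Finset X) (s : Finset ι) {D : ℝ} (hD : 1 ≤ D)
    (hinteraction : interactionSum p B s ≤ familyWeight p B s * D) :
    bernoulliFamily X {ω | ∀ i ∈ s, ¬ B i ⊆ randomSubset p ω} ≤
      ENNReal.ofReal (Real.exp (-(familyWeight p B s / (2 * D)))) := by
  have hD0 : 0 < D := zero_lt_one.trans_le hD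
  have hθ : D⁻¹ ∈ Set.Icc (0 : ℝ) 1 := ⟨inv_nonneg.2 hD0.le, inv_le_one_of_one_le₀ hD⟩
  refine (bernoulliFamily_forall_not_subset_le_exp hp hθ B s).trans
    (ENNReal.ofReal_le_ofReal (Real.exp_le_exp.2 ?_))
  calc -D⁻¹ * familyWeight p B s + D⁻¹ ^ 2 / 2 * interactionSum p B s
      ≤ -D⁻¹ * familyWeight p B s + D⁻¹ ^ 2 / 2 * (familyWeight p B s * D) := by gcongr
    _ = -(familyWeight p B s / (2 * D)) := by field_simp; ring

end RandomSubset

section PathCounting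

variable {X : Type*} {𝒢 : SimpleGraph X} {q : X → ℝ} {K : ℝ} {n : ℕ} {𝒮 : Finset (List X)}

lemma prod_map_nonneg (hq : ∀ x, 0 ≤ q x) (L : List X) : 0 ≤ (L.map q).prod :=
  List.prod_nonneg fun _ ha => by
    obtain ⟨x, -, rfl⟩ := List.mem_map.1 ha
    exact hq x

variable [Fintype X] [DecidableEq X] [DecidableRel 𝒢.Adj]

open Finset.HasAntidiagonal (antidiagonal mem_antidiagonal)

/-- The lists `L` such that `x :: L` is the vertex sequence of a walk of length `n` in `𝒢`. -/
def walkTails (𝒢 : SimpleGraph X) [DecidableRel 𝒢.Adj] : ℕ → X → Finset (List X)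
  | 0, _ => {[]}
  | n + 1, x => (𝒢.neighborFinset x).biUnion fun y => (walkTails 𝒢 n y).image (y :: ·)

lemma mem_walkTails_of_isChain {L : List X} {x : X} (h : (x :: L).IsChain 𝒢.Adj) :
    L ∈ walkTails 𝒢 L.length x := by
  induction L generalizing x with
  | nil => simp [walkTails]
  | cons y L ih =>
    rw [List.isChain_cons_cons] at h
    exact Finset.mem_biUnion.2
      ⟨y, (𝒢.mem_neighborFinset x y).2 h.1, Finset.mem_image_of_mem _ (ih h.2)⟩

lemma sum_walkTails_succ (q : X → ℝ) (n : ℕ) (x : X) :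
    ∑ L ∈ walkTails 𝒢 (n + 1) x, (L.map q).prod =
      ∑ y ∈ 𝒢.neighborFinset x, q y * ∑ L ∈ walkTails 𝒢 n y, (L.map q).prod := by
  rw [walkTails, Finset.sum_biUnion fun y _ z _ hyz => ?_]
  · refine Finset.sum_congr rfl fun y _ => ?_
    rw [Finset.sum_image (List.cons_injective.injOn), Finset.mul_sum]
    simp only [List.map_cons, List.prod_cons]
  · refine Finset.disjoint_left.2 fun L hy hz => hyz ?_
    obtain ⟨a, -, rfl⟩ := Finset.mem_image.1 hy
    obtain ⟨b, -, hb⟩ := Finset.mem_image.1 hz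
    exact (List.cons.inj hb).1.symm

lemma sum_walkTails_le_pow (hq : ∀ x, 0 ≤ q x) (hK : ∀ x, ∑ y ∈ 𝒢.neighborFinset x, q y ≤ K)
    (n : ℕ) (x : X) : ∑ L ∈ walkTails 𝒢 n x, (L.map q).prod ≤ K ^ n := by
  induction n generalizing x with
  | zero => simp [walkTails]
  | succ n ih =>
    have hK0 : 0 ≤ K := (Finset.sum_nonneg fun y _ => hq y).trans (hK x)
    calc _ = ∑ y ∈ 𝒢.neighborFinset x, q y * ∑ L ∈ walkTails 𝒢 n y, (L.map q).prod :=
          sum_walkTails_succ q n x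
      _ ≤ ∑ y ∈ 𝒢.neighborFinset x, q y * K ^ n :=
          Finset.sum_le_sum fun y _ => mul_le_mul_of_nonneg_left (ih y) (hq y)
      _ = (∑ y ∈ 𝒢.neighborFinset x, q y) * K ^ n := by rw [Finset.sum_mul]
      _ ≤ K * K ^ n := mul_le_mul_of_nonneg_right (hK x) (pow_nonneg hK0 n)
      _ = K ^ (n + 1) := (pow_succ' K n).symm

omit [DecidableEq X] in
lemma sum_prod_map_le_sum_mul_pow (hq : ∀ x, 0 ≤ q x)
    (hK : ∀ x, ∑ y ∈ 𝒢.neighborFinset x, q y ≤ K)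
    (h𝒮 : ∀ S ∈ 𝒮, S.length = n + 1 ∧ S.IsChain 𝒢.Adj) :
    ∑ S ∈ 𝒮, (S.map q).prod ≤ (∑ x, q x) * K ^ n := by
  classical
  have by_head : 𝒮 ⊆ (Finset.univ.sigma fun x => walkTails 𝒢 n x).image fun z => z.1 :: z.2 := by
    intro S hS
    obtain ⟨hlen, hchain⟩ := h𝒮 S hS
    obtain ⟨x, L, rfl⟩ := List.exists_cons_of_length_eq_add_one hlen
    obtain rfl : L.length = n := Nat.succ.inj hlen
    exact Finset.mem_image.2 ⟨⟨x, L⟩, by simpa using mem_walkTails_of_isChain hchain, rfl⟩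
  calc ∑ S ∈ 𝒮, (S.map q).prod
      ≤ ∑ z ∈ Finset.univ.sigma fun x => walkTails 𝒢 n x, ((z.1 :: z.2).map q).prod :=
        (Finset.sum_le_sum_of_subset_of_nonneg by_head fun L _ _ => prod_map_nonneg hq L).trans
          (Finset.sum_image_le_of_nonneg fun L _ => prod_map_nonneg hq L)
    _ = ∑ x, q x * ∑ L ∈ walkTails 𝒢 n x, (L.map q).prod := by
        simp only [Finset.sum_sigma, List.map_cons, List.prod_cons, Finset.mul_sum]
    _ ≤ (∑ x, q x) * K ^ n := by
        rw [Finset.sum_mul]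
        exact Finset.sum_le_sum fun x _ =>
          mul_le_mul_of_nonneg_left (sum_walkTails_le_pow hq hK n x) (hq x)

lemma exists_walkTails_of_mem {S : List X} {x : X} (hlen : S.length = n + 1)
    (hchain : S.IsChain 𝒢.Adj) (hx : x ∈ S) :
    ∃ ij ∈ antidiagonal n, ∃ L ∈ walkTails 𝒢 ij.1 x, ∃ R ∈ walkTails 𝒢 ij.2 x,
      L.reverse ++ x :: R = S := by
  obtain ⟨L, R, rfl⟩ := List.append_of_mem hx
  rw [List.isChain_split] at hchain
  have hL : (x :: L.reverse).IsChain 𝒢.Adj := by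
    rw [← List.reverse_concat, List.isChain_reverse]
    exact hchain.1.imp fun _ _ h => h.symm
  refine ⟨(L.reverse.length, R.length), ?_, L.reverse, mem_walkTails_of_isChain hL, R,
    mem_walkTails_of_isChain hchain.2, by rw [List.reverse_reverse]⟩
  simp only [List.length_append, List.length_cons] at hlen
  simp only [mem_antidiagonal, List.length_reverse]
  omega

omit [DecidableEq X] in
lemma sum_prod_map_le_of_forall_mem (hq : ∀ x, 0 ≤ q x)
    (hK : ∀ x, ∑ y ∈ 𝒢.neighborFinset x, q y ≤ K) (x : X)
    (h𝒮 : ∀ S ∈ 𝒮, S.length = n + 1 ∧ S.IsChain 𝒢.Adj ∧ x ∈ S) :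
    ∑ S ∈ 𝒮, (S.map q).prod ≤ q x * ((n + 1) * K ^ n) := by
  classical
  have hK0 : 0 ≤ K := (Finset.sum_nonneg fun y _ => hq y).trans (hK x)
  have by_position : 𝒮 ⊆ ((antidiagonal n).sigma
      fun ij => walkTails 𝒢 ij.1 x ×ˢ walkTails 𝒢 ij.2 x).image
        fun z => z.2.1.reverse ++ x :: z.2.2 := by
    intro S hS
    obtain ⟨hlen, hchain, hxS⟩ := h𝒮 S hS
    obtain ⟨ij, hij, L, hL, R, hR, rfl⟩ := exists_walkTails_of_mem hlen hchain hxS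
    exact Finset.mem_image.2
      ⟨⟨ij, L, R⟩, Finset.mem_sigma.2 ⟨hij, Finset.mem_product.2 ⟨hL, hR⟩⟩, rfl⟩
  calc ∑ S ∈ 𝒮, (S.map q).prod
      ≤ ∑ z ∈ (antidiagonal n).sigma
          fun ij => walkTails 𝒢 ij.1 x ×ˢ walkTails 𝒢 ij.2 x,
          ((z.2.1.reverse ++ x :: z.2.2).map q).prod :=
        (Finset.sum_le_sum_of_subset_of_nonneg by_position
          fun L _ _ => prod_map_nonneg hq L).trans
          (Finset.sum_image_le_of_nonneg fun L _ => prod_map_nonneg hq L)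
    _ = ∑ ij ∈ antidiagonal n, q x *
          ((∑ L ∈ walkTails 𝒢 ij.1 x, (L.map q).prod) *
            ∑ R ∈ walkTails 𝒢 ij.2 x, (R.map q).prod) := by
        rw [Finset.sum_sigma]
        refine Finset.sum_congr rfl fun ij _ => ?_
        rw [Finset.sum_mul_sum, ← Finset.sum_product', Finset.mul_sum]
        refine Finset.sum_congr rfl fun LR _ => ?_
        simp only [List.map_append, List.map_reverse, List.map_cons, List.prod_append,
          List.prod_reverse, List.prod_cons]
        ring
    _ ≤ ∑ ij ∈ antidiagonal n, q x * (K ^ ij.1 * K ^ ij.2) := by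
        gcongr with ij
        · exact hq x
        · exact Finset.sum_nonneg fun R _ => prod_map_nonneg hq R
        · exact sum_walkTails_le_pow hq hK _ _
        · exact sum_walkTails_le_pow hq hK _ _
    _ = ∑ _ ∈ antidiagonal n, q x * K ^ n :=
        Finset.sum_congr rfl fun ij hij => by rw [← pow_add, mem_antidiagonal.1 hij]
    _ = q x * ((n + 1) * K ^ n) := by
        rw [Finset.sum_const, Finset.Nat.card_antidiagonal, nsmul_eq_mul]
        push_cast
        ring

end PathCounting

section PathJanson

variable {X : Type*} [DecidableEq X] {p : X → ℝ} {n : ℕ} {𝒮 : Finset (List X)}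

/-- The weights `p` after conditioning on `T ⊆ X_p`. -/
def pinnedWeight (p : X → ℝ) (T : Finset X) (x : X) : ℝ := if x ∈ T then 1 else p x

lemma pinnedWeight_nonneg (hp : ∀ x, 0 ≤ p x) (T : Finset X) (x : X) :
    0 ≤ pinnedWeight p T x := by
  unfold pinnedWeight
  split_ifs
  exacts [zero_le_one, hp x]

lemma prod_union_eq_mul_prod_pinnedWeight (p : X → ℝ) (T S : Finset X) :
    ∏ x ∈ T ∪ S, p x = (∏ x ∈ T, p x) * ∏ x ∈ S, pinnedWeight p T x := by
  simp only [pinnedWeight, Finset.prod_ite, Finset.prod_const_one, one_mul,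
    Finset.filter_notMem_eq_sdiff]
  rw [← Finset.union_sdiff_self_eq_union, Finset.prod_union Finset.disjoint_sdiff]

lemma sum_pinnedWeight_le (hp : ∀ x, 0 ≤ p x) (T N : Finset X) :
    ∑ y ∈ N, pinnedWeight p T y ≤ ∑ y ∈ N, p y + T.card := by
  calc ∑ y ∈ N, pinnedWeight p T y ≤ ∑ y ∈ N, (p y + if y ∈ T then 1 else 0) := by
        refine Finset.sum_le_sum fun y _ => ?_
        unfold pinnedWeight
        split_ifs <;> linarith [hp y]
    _ = ∑ y ∈ N, p y + ((N.filter (· ∈ T)).card : ℝ) := by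
        rw [Finset.sum_add_distrib, Finset.sum_boole]
    _ ≤ ∑ y ∈ N, p y + T.card := by
        gcongr
        exact fun y hy => (Finset.mem_filter.1 hy).2

lemma interaction_toFinset_le (hp : ∀ x, 0 ≤ p x) (T : List X) {S : List X} (hS : S.Nodup) :
    interaction p List.toFinset T S ≤ (∏ x ∈ T.toFinset, p x) *
      ∑ x ∈ T.toFinset, if x ∈ S then (S.map (pinnedWeight p T.toFinset)).prod else 0 := by
  have hT0 : 0 ≤ ∏ x ∈ T.toFinset, p x := Finset.prod_nonneg fun x _ => hp x
  have hS0 := prod_map_nonneg (pinnedWeight_nonneg hp T.toFinset) S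
  have term_nonneg (x : X) :
      0 ≤ if x ∈ S then (S.map (pinnedWeight p T.toFinset)).prod else 0 := by
    split_ifs
    exacts [hS0, le_rfl]
  unfold interaction
  split_ifs with hTS
  · obtain ⟨x, hxT, hxS⟩ := Finset.not_disjoint_iff.1 hTS.2
    rw [prod_union_eq_mul_prod_pinnedWeight, List.prod_toFinset _ hS]
    refine mul_le_mul_of_nonneg_left ?_ hT0
    refine le_trans ?_ (Finset.single_le_sum (fun y _ => term_nonneg y) hxT)
    rw [if_pos (List.mem_toFinset.1 hxS)]
  · exact mul_nonneg hT0 (Finset.sum_nonneg fun x _ => term_nonneg x)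

variable [Fintype X] {𝒢 : SimpleGraph X} [DecidableRel 𝒢.Adj] {Δ : ℝ}

lemma sum_interaction_toFinset_le (hp : ∀ x, 0 ≤ p x)
    (hΔ : ∀ x, ∑ y ∈ 𝒢.neighborFinset x, p y ≤ Δ) {T : List X} (hT : T.length = n + 1)
    (h𝒮 : ∀ S ∈ 𝒮, S.length = n + 1 ∧ S.Nodup ∧ S.IsChain 𝒢.Adj) :
    ∑ S ∈ 𝒮, interaction p List.toFinset T S ≤
      (∏ x ∈ T.toFinset, p x) * ((n + 1) ^ 2 * (Δ + (n + 1)) ^ n) := by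
  have card_le : (T.toFinset.card : ℝ) ≤ n + 1 := by
    exact_mod_cast T.toFinset_card_le.trans_eq hT
  have hK (x : X) :
      ∑ y ∈ 𝒢.neighborFinset x, pinnedWeight p T.toFinset y ≤ Δ + (n + 1) :=
    (sum_pinnedWeight_le hp _ _).trans (add_le_add (hΔ x) card_le)
  have through (x : X) (hx : x ∈ T.toFinset) :
      ∑ S ∈ 𝒮.filter (x ∈ ·), (S.map (pinnedWeight p T.toFinset)).prod ≤
        (n + 1) * (Δ + (n + 1)) ^ n := by
    refine (sum_prod_map_le_of_forall_mem (pinnedWeight_nonneg hp _) hK x fun S hS => ?_).trans_eq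
      (by rw [pinnedWeight, if_pos hx, one_mul])
    obtain ⟨hS, hxS⟩ := Finset.mem_filter.1 hS
    exact ⟨(h𝒮 S hS).1, (h𝒮 S hS).2.2, hxS⟩
  have bound_nonneg : 0 ≤ (n + 1) * (Δ + (n + 1)) ^ n := by
    obtain ⟨x, -, -⟩ := List.exists_cons_of_length_eq_add_one hT
    have hΔ0 : 0 ≤ Δ := (Finset.sum_nonneg fun y _ => hp y).trans (hΔ x)
    positivity
  calc ∑ S ∈ 𝒮, interaction p List.toFinset T S
      ≤ ∑ S ∈ 𝒮, (∏ x ∈ T.toFinset, p x) *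
          ∑ x ∈ T.toFinset, if x ∈ S then (S.map (pinnedWeight p T.toFinset)).prod else 0 :=
        Finset.sum_le_sum fun S hS => interaction_toFinset_le hp T (h𝒮 S hS).2.1
    _ = (∏ x ∈ T.toFinset, p x) * ∑ x ∈ T.toFinset,
          ∑ S ∈ 𝒮.filter (x ∈ ·), (S.map (pinnedWeight p T.toFinset)).prod := by
        simp only [← Finset.mul_sum, Finset.sum_filter]
        rw [Finset.sum_comm]
    _ ≤ (∏ x ∈ T.toFinset, p x) * (T.toFinset.card * ((n + 1) * (Δ + (n + 1)) ^ n)) := by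
        rw [← nsmul_eq_mul]
        exact mul_le_mul_of_nonneg_left (Finset.sum_le_card_nsmul _ _ _ through)
          (Finset.prod_nonneg fun x _ => hp x)
    _ ≤ (∏ x ∈ T.toFinset, p x) * ((n + 1) ^ 2 * (Δ + (n + 1)) ^ n) := by
        rw [sq, mul_assoc ((n : ℝ) + 1)]
        exact mul_le_mul_of_nonneg_left (mul_le_mul_of_nonneg_right card_le bound_nonneg)
          (Finset.prod_nonneg fun x _ => hp x)

lemma interactionSum_toFinset_le (hp : ∀ x, 0 ≤ p x)
    (hΔ : ∀ x, ∑ y ∈ 𝒢.neighborFinset x, p y ≤ Δ)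
    (h𝒮 : ∀ S ∈ 𝒮, S.length = n + 1 ∧ S.Nodup ∧ S.IsChain 𝒢.Adj) :
    interactionSum p List.toFinset 𝒮 ≤
      familyWeight p List.toFinset 𝒮 * ((n + 1) ^ 2 * (Δ + (n + 1)) ^ n) := by
  rw [interactionSum, familyWeight, Finset.sum_mul]
  exact Finset.sum_le_sum fun T hT => sum_interaction_toFinset_le hp hΔ (h𝒮 T hT).1 h𝒮

end PathJanson

section Sprinkling

lemma sum_neighborFinset_le_maxNbrWeight {X : Type*} [Fintype X] (𝒢 : SimpleGraph X)
    [DecidableRel 𝒢.Adj] (p : X → ℝ) (x : X) :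
    ∑ y ∈ 𝒢.neighborFinset x, p y ≤ maxNbrWeight 𝒢 p := by
  have bdd : BddAbove {s : ℝ | ∃ x, s = ∑ᶠ y ∈ 𝒢.neighborSet x, p y} := by
    refine ((Set.finite_range fun x => ∑ᶠ y ∈ 𝒢.neighborSet x, p y).subset ?_).bddAbove
    rintro _ ⟨x, rfl⟩
    exact Set.mem_range_self x
  rw [← finsum_mem_coe_finset, SimpleGraph.coe_neighborFinset]
  exact le_csSup bdd ⟨x, rfl⟩

variable {X : Type*} [DecidableEq X] {p : X → ℝ} {m : ℕ} {𝒮 : Finset (List X)}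

lemma pathWeight_coe (h𝒮 : ∀ S ∈ 𝒮, S.Nodup) :
    pathWeight p (𝒮 : Set (List X)) = familyWeight p List.toFinset 𝒮 := by
  rw [pathWeight, finsum_mem_coe_finset]
  exact Finset.sum_congr rfl fun S hS => (List.prod_toFinset p (h𝒮 S hS)).symm

lemma interactionSum_toFinset_eq_zero_of_length_eq_one (h𝒮 : ∀ S ∈ 𝒮, S.length = 1) :
    interactionSum p List.toFinset 𝒮 = 0 := by
  refine Finset.sum_eq_zero fun T hT => Finset.sum_eq_zero fun S hS => if_neg ?_
  obtain ⟨x, rfl⟩ := List.length_eq_one_iff.1 (h𝒮 T hT)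
  obtain ⟨y, rfl⟩ := List.length_eq_one_iff.1 (h𝒮 S hS)
  simp

lemma two_mul_add_two_le_six_mul_three_pow (m : ℕ) : 2 * ((m : ℝ) + 2) ≤ 6 * 3 ^ m := by
  calc 2 * ((m : ℝ) + 2) ≤ 6 * (1 + m * 2) := by linarith [(m.cast_nonneg : (0 : ℝ) ≤ m)]
    _ ≤ 6 * (1 + 2) ^ m := by
        gcongr
        exact one_add_mul_le_pow (by norm_num) m
    _ = 6 * 3 ^ m := by norm_num

lemma two_mul_sq_mul_add_pow_le {Δ : ℝ} (hΔ : 2 * ((m : ℝ) + 2) ≤ Δ) :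
    2 * ((m + 2) ^ 2 * (Δ + (m + 2)) ^ (m + 1)) ≤
      (3 * Δ) ^ (m + 1) * (m + 2) ^ (m + 2) := by
  have hΔ0 : 0 ≤ Δ := le_trans (by positivity) hΔ
  calc 2 * (((m : ℝ) + 2) ^ 2 * (Δ + (m + 2)) ^ (m + 1))
      ≤ 2 ^ (m + 1) * ((m + 2) ^ (m + 2) * (3 * Δ / 2) ^ (m + 1)) := by
        gcongr
        · exact le_self_pow₀ one_le_two m.succ_ne_zero
        · linarith [(m.cast_nonneg : (0 : ℝ) ≤ m)]
        · omega
        · linarith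
    _ = (3 * Δ) ^ (m + 1) * (m + 2) ^ (m + 2) := by
        rw [div_pow]
        field_simp

variable [Fintype X] {𝒢 : SimpleGraph X} [DecidableRel 𝒢.Adj] {Δ : ℝ}

lemma two_mul_length_le_of_familyWeight_pos (hp : ∀ x, 0 ≤ p x)
    (hΔ : ∀ x, ∑ y ∈ 𝒢.neighborFinset x, p y ≤ Δ)
    (h𝒮 : ∀ S ∈ 𝒮, S.length = m + 2 ∧ S.Nodup ∧ S.IsChain 𝒢.Adj)
    (hpos : 0 < familyWeight p List.toFinset 𝒮)
    (hbig : 6 * (3 * Δ) ^ m * ∑ x, p x ≤ familyWeight p List.toFinset 𝒮) :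
    2 * ((m : ℝ) + 2) ≤ Δ := by
  have le_count : familyWeight p List.toFinset 𝒮 ≤ (∑ x, p x) * Δ ^ (m + 1) := by
    rw [← pathWeight_coe fun S hS => (h𝒮 S hS).2.1, pathWeight, finsum_mem_coe_finset]
    exact sum_prod_map_le_sum_mul_pow hp hΔ fun S hS => ⟨(h𝒮 S hS).1, (h𝒮 S hS).2.2⟩
  have hpX : 0 ≤ ∑ x, p x := Finset.sum_nonneg fun x _ => hp x
  have hpX0 : ∑ x, p x ≠ 0 := left_ne_zero_of_mul (hpos.trans_le le_count).ne'
  have hΔ0 : Δ ≠ 0 :=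
    ne_zero_pow m.succ_ne_zero (right_ne_zero_of_mul (hpos.trans_le le_count).ne')
  obtain ⟨x, -, -⟩ := Finset.exists_ne_zero_of_sum_ne_zero hpX0
  have hΔpos : 0 < Δ := ((Finset.sum_nonneg fun y _ => hp y).trans (hΔ x)).lt_of_ne' hΔ0
  have six_mul_three_pow_le : 6 * 3 ^ m ≤ Δ := by
    refine le_of_mul_le_mul_right ?_ (mul_pos (pow_pos hΔpos m) (hpX.lt_of_ne' hpX0))
    calc 6 * 3 ^ m * (Δ ^ m * ∑ x, p x) = 6 * (3 * Δ) ^ m * ∑ x, p x := by rw [mul_pow]; ring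
      _ ≤ (∑ x, p x) * Δ ^ (m + 1) := hbig.trans le_count
      _ = Δ * (Δ ^ m * ∑ x, p x) := by ring
  exact (two_mul_add_two_le_six_mul_three_pow m).trans six_mul_three_pow_le

theorem bernoulliFamily_forall_not_toFinset_subset_le (hp : ∀ x, p x ∈ Set.Icc 0 1)
    (hΔ : ∀ x, ∑ y ∈ 𝒢.neighborFinset x, p y ≤ Δ) (hlarge : 2 * ((m : ℝ) + 2) ≤ Δ)
    (h𝒮 : ∀ S ∈ 𝒮, S.length = m + 2 ∧ S.Nodup ∧ S.IsChain 𝒢.Adj) :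
    bernoulliFamily X {ω | ∀ S ∈ 𝒮, ¬ S.toFinset ⊆ randomSubset p ω} ≤
      ENNReal.ofReal (Real.exp (-(familyWeight p List.toFinset 𝒮 /
        ((3 * Δ) ^ (m + 1) * (m + 2) ^ (m + 2))))) := by
  have one_le_add_two : (1 : ℝ) ≤ m + 2 := by linarith [(m.cast_nonneg : (0 : ℝ) ≤ m)]
  have one_le_D : 1 ≤ ((m : ℝ) + 2) ^ 2 * (Δ + (m + 2)) ^ (m + 1) :=
    one_le_mul_of_one_le_of_one_le (one_le_pow₀ one_le_add_two) (one_le_pow₀ (by linarith))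
  have interaction_le : interactionSum p List.toFinset 𝒮 ≤
      familyWeight p List.toFinset 𝒮 * ((m + 2) ^ 2 * (Δ + (m + 2)) ^ (m + 1)) := by
    simpa [add_assoc, one_add_one_eq_two] using
      interactionSum_toFinset_le (n := m + 1) (fun x => (hp x).1) hΔ h𝒮
  refine (bernoulliFamily_forall_not_subset_le_exp_neg_div hp _ _ one_le_D interaction_le).trans
    (ENNReal.ofReal_le_ofReal (Real.exp_le_exp.2 (neg_le_neg ?_)))
  have hweight : 0 ≤ familyWeight p List.toFinset 𝒮 := familyWeight_nonneg (fun x => (hp x).1) _ _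
  exact div_le_div_of_nonneg_left hweight (by linarith) (two_mul_sq_mul_add_pow_le hlarge)

end Sprinkling

end Paper

/-- **Lemma 20 (sprinkling).**  Let `𝒯` be a family of paths on `r` vertices in a graph
`𝒢` on `X`, let `Δ = max_x p(N_𝒢(x))`, and let `X_p` be a product-Bernoulli random
subset of `X`.  If `p[𝒯] ≥ 6 (3Δ)^{r-2} p(X)`, then the probability that no path of `𝒯`
is entirely contained in `X_p` is at most `exp(-p[𝒯]/((3Δ)^{r-1} r^r))`. -/
theorem lemma_sprinkling (X : Type*) [Fintype X] (p : X → ℝ)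
    (hp : ∀ x, 0 ≤ p x ∧ p x ≤ 1) (𝒢 : SimpleGraph X)
    (r : ℕ) (hr : 1 ≤ r) (𝒯 : Set (List X))
    (h𝒯 : ∀ T ∈ 𝒯, T.length = r ∧ T.Nodup ∧ T.Chain' 𝒢.Adj)
    (hbig : 6 * (3 * maxNbrWeight 𝒢 p) ^ ((r : ℤ) - 2) * (∑ x, p x) ≤ pathWeight p 𝒯) :
    bernoulliFamily X {ω | ∀ T ∈ 𝒯, ∃ x ∈ T, ¬ ω x ≤ p x}
      ≤ ENNReal.ofReal (Real.exp (-(pathWeight p 𝒯 /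
          ((3 * maxNbrWeight 𝒢 p) ^ (r - 1) * (r : ℝ) ^ r)))) := by
  classical
  have hΔ := sum_neighborFinset_le_maxNbrWeight 𝒢 p
  lift 𝒯 to Finset (List X) using
    (List.finite_length_eq X r).subset fun T hT => (h𝒯 T hT).1
  simp only [Finset.mem_coe] at h𝒯 ⊢
  rw [pathWeight_coe fun T hT => (h𝒯 T hT).2.1] at hbig ⊢
  have event_eq : {ω : X → ℝ | ∀ T ∈ 𝒯, ∃ x ∈ T, ¬ ω x ≤ p x} =
      {ω | ∀ T ∈ 𝒯, ¬ T.toFinset ⊆ randomSubset p ω} := by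
    simp [Finset.subset_iff, mem_randomSubset]
  rw [event_eq]
  rcases (familyWeight_nonneg (fun x => (hp x).1) List.toFinset 𝒯).eq_or_lt with hzero | hpos
  · simpa [← hzero] using prob_le_one
  obtain rfl | ⟨m, rfl⟩ : r = 1 ∨ ∃ m, r = m + 2 := by
    obtain rfl | h := hr.eq_or_lt
    exacts [.inl rfl, .inr (Nat.exists_eq_add_of_le' h)]
  · simpa [interactionSum_toFinset_eq_zero_of_length_eq_one fun T hT => (h𝒯 T hT).1] using
      bernoulliFamily_forall_not_subset_le_exp hp (θ := 1) (by simp) List.toFinset 𝒯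
  · have hlarge := two_mul_length_le_of_familyWeight_pos (fun x => (hp x).1) hΔ h𝒯 hpos
      (by simpa using hbig)
    simpa using bernoulliFamily_forall_not_toFinset_subset_le hp hΔ hlarge h𝒯
end
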